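/- Let A ⊊ G_n be non-empty and x ∈ G_n. Then P^{G_n}-almost surely, Var_{P^{G_n}}( Ψ_{G_n}(x) | σ(Ψ_{G_n}(y), y ∈ A) ) = G_{G_n}(x,x) − E_x^{G_n}[ G_{G_n}(X_{H_A}, x) ] + (E_x^{G_n}[H_A] / E_π^{G_n}[H_A]) · E_π^{G_n}[ G_{G_n}(X_{H_A}, x) ], where E_π^{G_n} is the expectation for simple random walk on G_n started from the uniform distribution on the vertices of G_n. -/

import Mathlib

open MeasureTheory ProbabilityTheory Filter Set
open scoped ENNReal NNReal ENat Classical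

namespace GFF

variable {V : Type*} {T : Type*}

/-- Number of ordered adjacent pairs inside `U` (twice the number of edges of the induced
subgraph). -/
noncomputable def adjPairs (G : SimpleGraph V) (U : Set V) : ℕ :=
  Set.ncard {p : V × V | p.1 ∈ U ∧ p.2 ∈ U ∧ G.Adj p.1 p.2}

/-- `U` (assumed connected) induces a tree, i.e. has tree excess zero. -/
def TxZero (G : SimpleGraph V) (U : Set V) : Prop :=
  adjPairs G U = 2 * (Set.ncard U - 1)

/-- Closed ball of radius `R` for the graph distance. -/
def gball (G : SimpleGraph V) (x : V) (R : ℕ) : Set V := {y | G.dist x y ≤ R}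

/-- Set of vertices within distance `R` of the set `A`. -/
def sball (G : SimpleGraph V) (A : Set V) (R : ℕ) : Set V := {y | ∃ a ∈ A, G.dist a y ≤ R}

/-- Connected component containing `x` of the level set `{ω ≥ h}`. -/
def levelComp (G : SimpleGraph V) (h : ℝ) (ω : V → ℝ) (x : V) : Set V :=
  {y | ∃ p : G.Walk x y, ∀ v ∈ p.support, h ≤ ω v}

/-- `G` is `d`-regular. -/
def IsReg (G : SimpleGraph V) (d : ℕ) : Prop := ∀ v, Nat.card (G.neighborSet v) = d

/-- `G` is an infinite `d`-regular tree. -/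
def IsRegTree (G : SimpleGraph V) (d : ℕ) : Prop :=
  G.Connected ∧ G.IsAcyclic ∧ IsReg G d

/-- Transition matrix of SRW on a `d`-regular graph. -/
noncomputable def transP [Fintype V] (G : SimpleGraph V) (d : ℕ) : Matrix V V ℝ :=
  Matrix.of fun u v => if G.Adj u v then ((d : ℝ))⁻¹ else 0

/-- All non-zero eigenvalues of `I - P` are at least `β`. -/
def SpectralGapLB [Fintype V] (G : SimpleGraph V) (d : ℕ) (β : ℝ) : Prop :=
  ∀ (f : V → ℝ) (lam : ℝ),
    Matrix.mulVec ((1 : Matrix V V ℝ) - transP G d) f = lam • f → f ≠ 0 → lam = 0 ∨ β ≤ lam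

/-- `P_x[X̄_t = y]` for the continuous-time SRW with i.i.d. mean-one exponential holding
times (Poissonized jump chain). -/
noncomputable def heatK [Fintype V] (G : SimpleGraph V) (d : ℕ) (t : ℝ) (x y : V) : ℝ :=
  ∑' k : ℕ, Real.exp (-t) * t ^ k / (Nat.factorial k) * ((transP G d) ^ k) x y

/-- The zero-average Green function. -/
noncomputable def zGreen [Fintype V] (G : SimpleGraph V) (d Nn : ℕ) (x y : V) : ℝ :=
  ∫ t in Set.Ioi (0 : ℝ), (heatK G d t x y - 1 / (Nn : ℝ))

/-- Green function of SRW on the `d`-regular tree. -/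
noncomputable def treeGreen (G : SimpleGraph V) (d : ℕ) (x y : V) : ℝ :=
  (((d : ℝ) - 1) / ((d : ℝ) - 2)) * (((d : ℝ) - 1)⁻¹) ^ (G.dist x y)

/-- `μ` is the law of the centred Gaussian field with covariance `K`. -/
def IsGaussianField {I : Type*} (μ : Measure (I → ℝ)) (K : I → I → ℝ) : Prop :=
  IsProbabilityMeasure μ ∧
    ∀ c : I →₀ ℝ,
      μ.map (fun ω => ∑ i ∈ c.support, c i * ω i) =
        gaussianReal 0 (Real.toNNReal (∑ i ∈ c.support, ∑ j ∈ c.support, c i * c j * K i j))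

/-- One-step transition probability of SRW. -/
noncomputable def srwStep (G : SimpleGraph V) (d : ℕ) (u v : V) : ℝ≥0∞ :=
  if G.Adj u v then (d : ℝ≥0∞)⁻¹ else 0

/-- `W x` is the law of discrete-time SRW on `G` started at `x`. -/
def IsSRW [MeasurableSpace V] (G : SimpleGraph V) (d : ℕ) (W : V → Measure (ℕ → V)) : Prop :=
  (∀ x, IsProbabilityMeasure (W x)) ∧
    ∀ (x : V) (k : ℕ) (p : ℕ → V),
      W x {ω | ∀ i ≤ k, ω i = p i} =
        (if p 0 = x then 1 else 0) * ∏ i ∈ Finset.range k, srwStep G d (p i) (p (i + 1))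

/-- Entrance time of the set `A` (`⊤` if never entered). -/
noncomputable def hitTime (A : Set V) (ω : ℕ → V) : ℕ∞ :=
  sInf ((Nat.cast : ℕ → ℕ∞) '' {k | ω k ∈ A})

/-- Exit time of the set `U`. -/
noncomputable def exitTime (U : Set V) (ω : ℕ → V) : ℕ∞ := hitTime Uᶜ ω

/-- Position of the walk at the entrance time of `A`. -/
noncomputable def stopAt (A : Set V) (ω : ℕ → V) : V := ω (hitTime A ω).toNat

/-- `π` is a cover tree of `G` at `x`. -/
def IsCoverMap (Gt : SimpleGraph T) (G : SimpleGraph V) (o : T) (x : V) (π : T → V) : Prop :=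
  π o = x ∧ Function.Surjective π ∧ ∀ y : T, π '' (Gt.neighborSet y) = G.neighborSet (π y)

/-- `T_d^+`: the vertices of the tree whose geodesic to `o` avoids the fixed neighbour
`obar` of `o`. -/
def treePlus (Gt : SimpleGraph T) (o obar : T) : Set T :=
  {z | Gt.dist z obar = Gt.dist z o + 1}

/-- `S^+_{T_d}(o,R)`. -/
def spherePlus (Gt : SimpleGraph T) (o obar : T) (R : ℕ) : Set T :=
  {z | z ∈ treePlus Gt o obar ∧ Gt.dist o z = R}

/-- The critical value for level-set percolation on the tree (w.r.t. the law `μT`). -/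
noncomputable def hstar (Gt : SimpleGraph T) (o : T) (μT : Measure (T → ℝ)) : ℝ :=
  sInf {h : ℝ | μT {ω | (levelComp Gt h ω o).Infinite} = 0}

/-- The forward percolation probability `η⁺(h)`. -/
noncomputable def etaPlus (Gt : SimpleGraph T) (o obar : T) (μT : Measure (T → ℝ)) (h : ℝ) :
    ℝ :=
  (μT {ω | (levelComp Gt h ω o ∩ treePlus Gt o obar).Infinite}).toReal

/-- `s_n`. -/
noncomputable def sn (d Nn : ℕ) : ℕ :=
  max 1 ⌊(8 : ℝ) * Real.logb ((d : ℝ) - 1) (Real.logb ((d : ℝ) - 1) (Nn : ℝ))⌋₊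

/-- `c₀ = αβ/(d-1)`. -/
noncomputable def c0 (d : ℕ) (α β : ℝ) : ℝ := α * β / ((d : ℝ) - 1)

/-- `r_n`. -/
noncomputable def rn (d : ℕ) (α β : ℝ) (Nn : ℕ) : ℕ :=
  max 1 ⌊(c0 d α β / 18) * Real.logb ((d : ℝ) - 1) (Nn : ℝ)⌋₊

/-- `R_n`. -/
noncomputable def Rn (d : ℕ) (α β : ℝ) (Nn : ℕ) : ℕ :=
  max 1 ⌊(c0 d α β / 6) * Real.logb ((d : ℝ) - 1) (Nn : ℝ)⌋₊

/-- `F_A(x,s)`: the vertices of `B(A,s) ∖ A` connected to `x` within `B(A,s) ∖ A`. -/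
def Fset (G : SimpleGraph V) (A : Set V) (s : ℕ) (x : V) : Set V :=
  {z | ∃ p : G.Walk x z, ∀ v ∈ p.support, v ∈ sball G A s ∧ v ∉ A}

/-- Good vertex at the boundary of `A`. -/
def GoodVertex (G : SimpleGraph V) (A : Set V) (s : ℕ) (x : V) : Prop :=
  x ∉ A ∧ (∃! y, y ∈ A ∧ G.Adj x y) ∧
    TxZero G (Fset G A s x) ∧
    ∀ y : V, y ∉ A → (∃ a ∈ A, G.Adj y a) → y ≠ x →
      ∀ p : G.Walk y x, (∀ v ∈ p.support, v ∉ A) → ∃ v ∈ p.support, v ∉ sball G A s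

end GFF

/-!
Write `K` for the zero-average Green function, `P` for the transition matrix and `N` for the number
of vertices. Spectral calculus identifies `K` with the Moore–Penrose inverse of `1 - P`, so `K` is
positive semidefinite, its columns sum to `0`, and `P K(·, a) = K(·, a) + 1 / N` away from `a`.
Hence for `a ∈ A` optional stopping at `H = H_A` gives `E_z[K(X_H, a)] = K(z, a) + E_z[H] / N`, and
averaging over `z` gives `E_π[K(X_H, a)] = E_π[H] / N`. Eliminating `1 / N` yields

`K(x, a) = E_x[K(X_H, a)] - (E_x[H] / E_π[H]) E_π[K(X_H, a)]`,

that is, `K(x, a) = ∑ v, b v * K(v, a)` with weights `b` supported in `A`. Thus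
`Ψ(x) - ∑ v, b v * Ψ(v)` is uncorrelated with, hence independent of, the field on `A`, and its
variance `K(x, x) - ∑ v, b v * K(v, x)` is the conditional variance.
-/

namespace GFF

section SpectralCalculus

open Matrix
open scoped MatrixOrder

variable {ι : Type*} [Fintype ι] {L : Matrix ι ι ℝ}

/-- The Moore–Penrose inverse of a symmetric matrix; the convention `0⁻¹ = 0` makes it vanish on
the kernel. -/
noncomputable def pinv (L : Matrix ι ι ℝ) : Matrix ι ι ℝ := cfc (fun s : ℝ ↦ s⁻¹) L

/-- The orthogonal projection onto the kernel of a symmetric matrix. -/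
noncomputable def kerProj (L : Matrix ι ι ℝ) : Matrix ι ι ℝ := cfc (Pi.single 0 1 : ℝ → ℝ) L

theorem continuousOn_spectrum (f : ℝ → ℝ) (L : Matrix ι ι ℝ) : ContinuousOn f (spectrum ℝ L) :=
  L.finite_real_spectrum.continuousOn f

theorem cfc_mul_matrix (f g : ℝ → ℝ) (L : Matrix ι ι ℝ) :
    cfc f L * cfc g L = cfc (fun s ↦ f s * g s) L :=
  (cfc_mul f g L (continuousOn_spectrum f L) (continuousOn_spectrum g L)).symm

theorem cfc_apply_eq_sum (hL : L.IsHermitian) (f : ℝ → ℝ) (x y : ι) :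
    cfc f L x y = ∑ i, f (hL.eigenvalues i) *
      (hL.eigenvectorUnitary.1 x i * hL.eigenvectorUnitary.1 y i) := by
  rw [hL.cfc_eq, IsHermitian.cfc, Unitary.conjStarAlgAut_apply, Matrix.mul_apply]
  refine Finset.sum_congr rfl fun i _ ↦ ?_
  rw [Matrix.mul_diagonal, Matrix.star_apply]
  simp only [Function.comp_apply, RCLike.ofReal_real_eq_id, id_eq, star_trivial]
  ring

theorem isHermitian_pinv (L : Matrix ι ι ℝ) : (pinv L).IsHermitian := cfc_predicate _ L

theorem isHermitian_kerProj (L : Matrix ι ι ℝ) : (kerProj L).IsHermitian := cfc_predicate _ L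

theorem posSemidef_pinv (hL : L.PosSemidef) : (pinv L).PosSemidef :=
  (cfc_nonneg fun _ hs ↦ inv_nonneg.2 (spectrum_nonneg_of_nonneg hL.nonneg hs)).posSemidef

theorem mul_kerProj (hL : L.IsHermitian) : L * kerProj L = 0 := by
  calc L * kerProj L = cfc (fun s : ℝ ↦ s) L * kerProj L := by rw [cfc_id' ℝ L]
    _ = cfc (fun s : ℝ ↦ s * (Pi.single 0 1 : ℝ → ℝ) s) L := cfc_mul_matrix ..
    _ = cfc (fun _ : ℝ ↦ (0 : ℝ)) L := by
      congr 1
      ext s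
      by_cases hs : s = 0 <;> simp [hs]
    _ = 0 := cfc_const_zero ℝ L

theorem kerProj_mul_pinv (L : Matrix ι ι ℝ) : kerProj L * pinv L = 0 := by
  calc kerProj L * pinv L = cfc (fun s : ℝ ↦ (Pi.single 0 1 : ℝ → ℝ) s * s⁻¹) L :=
        cfc_mul_matrix ..
    _ = cfc (fun _ : ℝ ↦ (0 : ℝ)) L := by
      congr 1
      ext s
      by_cases hs : s = 0 <;> simp [hs]
    _ = 0 := cfc_const_zero ℝ L

theorem mul_pinv (hL : L.IsHermitian) : L * pinv L = 1 - kerProj L := by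
  calc L * pinv L = cfc (fun s : ℝ ↦ s) L * pinv L := by rw [cfc_id' ℝ L]
    _ = cfc (fun s : ℝ ↦ s * s⁻¹) L := cfc_mul_matrix ..
    _ = cfc (fun s : ℝ ↦ 1 - (Pi.single 0 1 : ℝ → ℝ) s) L := by
      congr 1
      ext s
      by_cases hs : s = 0 <;> simp [hs]
    _ = 1 - kerProj L := by
      rw [cfc_sub _ _ L (continuousOn_spectrum _ L) (continuousOn_spectrum _ L),
        cfc_const_one ℝ L, kerProj]

theorem pinv_mul (hL : L.IsHermitian) : pinv L * L = 1 - kerProj L := by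
  simpa only [conjTranspose_mul, conjTranspose_sub, conjTranspose_one, hL.eq,
    (isHermitian_pinv L).eq, (isHermitian_kerProj L).eq] using
    congrArg conjTranspose (mul_pinv hL)

theorem hasSum_poisson_mul_one_sub_pow (t s : ℝ) :
    HasSum (fun k : ℕ ↦ Real.exp (-t) * t ^ k / k.factorial * (1 - s) ^ k)
      (Real.exp (-(t * s))) := by
  have hterm (k : ℕ) : Real.exp (-t) * t ^ k / k.factorial * (1 - s) ^ k =
      Real.exp (-t) * ((t * (1 - s)) ^ k / k.factorial) := by
    rw [mul_pow]
    ring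
  have hexp : Real.exp (-(t * s)) = Real.exp (-t) * Real.exp (t * (1 - s)) := by
    rw [← Real.exp_add]
    ring_nf
  simp_rw [hterm, hexp, Real.exp_eq_exp_ℝ]
  exact (NormedSpace.expSeries_div_hasSum_exp (𝔸 := ℝ) (t * (1 - s))).mul_left _

theorem hasSum_poisson_one_sub_pow (hL : L.IsHermitian) (t : ℝ) (x y : ι) :
    HasSum (fun k : ℕ ↦ Real.exp (-t) * t ^ k / k.factorial * ((1 - L) ^ k) x y)
      (cfc (fun s : ℝ ↦ Real.exp (-(t * s))) L x y) := by
  have hpow (k : ℕ) : (1 - L) ^ k = cfc (fun s : ℝ ↦ (1 - s) ^ k) L := by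
    rw [cfc_pow _ k L (continuousOn_spectrum _ L),
      cfc_sub _ _ L (continuousOn_spectrum _ L) (continuousOn_spectrum _ L),
      cfc_const_one ℝ L, cfc_id' ℝ L]
  simp_rw [hpow, cfc_apply_eq_sum hL, Finset.mul_sum, ← mul_assoc]
  refine hasSum_sum fun i _ ↦ ?_
  simpa only [mul_assoc] using
    (hasSum_poisson_mul_one_sub_pow t (hL.eigenvalues i)).mul_right
      (hL.eigenvectorUnitary.1 x i * hL.eigenvectorUnitary.1 y i)

theorem integrableOn_exp_neg_mul_sub_single {s : ℝ} (hs : 0 ≤ s) :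
    IntegrableOn (fun t : ℝ ↦ Real.exp (-(t * s)) - (Pi.single 0 1 : ℝ → ℝ) s) (Ioi 0) := by
  obtain rfl | hs := hs.eq_or_lt
  · simp
  · simpa [hs.ne', mul_comm] using exp_neg_integrableOn_Ioi 0 hs

theorem integral_exp_neg_mul_sub_single {s : ℝ} (hs : 0 ≤ s) :
    ∫ t in Ioi (0 : ℝ), (Real.exp (-(t * s)) - (Pi.single 0 1 : ℝ → ℝ) s) = s⁻¹ := by
  obtain rfl | hs := hs.eq_or_lt
  · simp
  · simpa [hs.ne', mul_comm] using integral_exp_mul_Ioi (neg_lt_zero.2 hs) 0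

theorem integral_cfc_exp_sub_kerProj (hL : L.PosSemidef) (x y : ι) :
    ∫ t in Ioi (0 : ℝ), (cfc (fun s : ℝ ↦ Real.exp (-(t * s))) L x y - kerProj L x y) =
      pinv L x y := by
  have hH := hL.isHermitian
  simp_rw [kerProj, pinv, cfc_apply_eq_sum hH, ← Finset.sum_sub_distrib, ← sub_mul]
  rw [integral_finsetSum _ fun i _ ↦
    (integrableOn_exp_neg_mul_sub_single (hL.eigenvalues_nonneg i)).mul_const _]
  simp_rw [integral_mul_const, integral_exp_neg_mul_sub_single (hL.eigenvalues_nonneg _)]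

theorem kerProj_apply_of_ker_eq_const (hL : L.IsHermitian)
    (hker : ∀ f : ι → ℝ, L *ᵥ f = 0 ↔ ∀ x y, f x = f y) (x y : ι) :
    kerProj L x y = (Fintype.card ι : ℝ)⁻¹ := by
  have hcol (x x' y : ι) : kerProj L x y = kerProj L x' y := by
    refine (hker fun z ↦ kerProj L z y).1 ?_ x x'
    ext z
    exact congrFun₂ (mul_kerProj hL) z y
  have hconst (u v : ι) : kerProj L u v = kerProj L x y := by
    rw [hcol u y v, ← (isHermitian_kerProj L).apply, star_trivial, hcol v x y]
  have hsum : ∑ z, kerProj L x z = 1 := by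
    have h : (1 - kerProj L) *ᵥ (1 : ι → ℝ) = 0 := by
      rw [← pinv_mul hL, ← mulVec_mulVec, (hker 1).2 fun _ _ ↦ rfl, mulVec_zero]
    rw [Matrix.sub_mulVec, one_mulVec, sub_eq_zero] at h
    simpa [mulVec, dotProduct] using (congrFun h x).symm
  have hcard : (Fintype.card ι : ℝ) * kerProj L x y = 1 := by simpa [hconst] using hsum
  exact eq_inv_of_mul_eq_one_right hcard

end SpectralCalculus

section GreenFunction

open Matrix

variable {V : Type*} [Fintype V] {G : SimpleGraph V} {d : ℕ}

theorem degree_eq_of_isReg (hreg : IsReg G d) (v : V) : G.degree v = d := by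
  rw [← G.card_neighborSet_eq_degree, ← Nat.card_eq_fintype_card, hreg v]

theorem one_sub_transP_eq_smul_lapMatrix (hreg : IsReg G d) (hd : d ≠ 0) :
    1 - transP G d = (d : ℝ)⁻¹ • G.lapMatrix ℝ := by
  ext u v
  have hd' : (d : ℝ) ≠ 0 := Nat.cast_ne_zero.2 hd
  by_cases huv : u = v
  · subst huv
    simp [SimpleGraph.lapMatrix, SimpleGraph.degMatrix, transP, degree_eq_of_isReg hreg, hd']
  · simp [SimpleGraph.lapMatrix, SimpleGraph.degMatrix, transP, huv]

theorem posSemidef_one_sub_transP (hreg : IsReg G d) (hd : d ≠ 0) :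
    (1 - transP G d).PosSemidef := by
  rw [one_sub_transP_eq_smul_lapMatrix hreg hd]
  exact (SimpleGraph.posSemidef_lapMatrix ℝ G).smul (by positivity)

theorem one_sub_transP_mulVec_eq_zero_iff (hconn : G.Connected) (hreg : IsReg G d) (hd : d ≠ 0)
    (f : V → ℝ) : (1 - transP G d) *ᵥ f = 0 ↔ ∀ x y, f x = f y := by
  rw [one_sub_transP_eq_smul_lapMatrix hreg hd, smul_mulVec,
    smul_eq_zero_iff_right (inv_ne_zero (Nat.cast_ne_zero.2 hd)),
    SimpleGraph.lapMatrix_mulVec_eq_zero_iff_forall_reachable]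
  exact forall₂_congr fun x y ↦ imp_iff_right (hconn.preconnected x y)

theorem kerProj_one_sub_transP_apply (hconn : G.Connected) (hreg : IsReg G d) (hd : d ≠ 0)
    (x y : V) : kerProj (1 - transP G d) x y = (Fintype.card V : ℝ)⁻¹ :=
  kerProj_apply_of_ker_eq_const (posSemidef_one_sub_transP hreg hd).isHermitian
    (one_sub_transP_mulVec_eq_zero_iff hconn hreg hd) x y

theorem heatK_eq_cfc (hreg : IsReg G d) (hd : d ≠ 0) (t : ℝ) (x y : V) :
    heatK G d t x y = cfc (fun s : ℝ ↦ Real.exp (-(t * s))) (1 - transP G d) x y := by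
  simpa only [heatK, sub_sub_cancel] using (hasSum_poisson_one_sub_pow
    (posSemidef_one_sub_transP hreg hd).isHermitian t x y).tsum_eq

theorem zGreen_eq_pinv (hconn : G.Connected) (hreg : IsReg G d) (hd : d ≠ 0) :
    zGreen G d (Fintype.card V) = pinv (1 - transP G d) := by
  ext x y
  rw [← integral_cfc_exp_sub_kerProj (posSemidef_one_sub_transP hreg hd)]
  simp only [zGreen, heatK_eq_cfc hreg hd, kerProj_one_sub_transP_apply hconn hreg hd, one_div]

theorem posSemidef_zGreen (hconn : G.Connected) (hreg : IsReg G d) (hd : d ≠ 0) :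
    Matrix.PosSemidef (zGreen G d (Fintype.card V)) := by
  rw [zGreen_eq_pinv hconn hreg hd]
  exact posSemidef_pinv (posSemidef_one_sub_transP hreg hd)

theorem sum_zGreen (hconn : G.Connected) (hreg : IsReg G d) (hd : d ≠ 0) (y : V) :
    ∑ x, zGreen G d (Fintype.card V) x y = 0 := by
  have h := congrFun₂ (kerProj_mul_pinv (1 - transP G d)) y y
  simp_rw [Matrix.mul_apply, kerProj_one_sub_transP_apply hconn hreg hd, ← Finset.mul_sum,
    ← zGreen_eq_pinv hconn hreg hd] at h
  have hcard : Fintype.card V ≠ 0 := (Fintype.card_pos_iff.2 ⟨y⟩).ne'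
  exact (mul_eq_zero_iff_left (inv_ne_zero (Nat.cast_ne_zero.2 hcard))).1 h

theorem zGreen_sub_sum_transP_mul (hconn : G.Connected) (hreg : IsReg G d) (hd : d ≠ 0)
    (x y : V) :
    zGreen G d (Fintype.card V) x y -
        ∑ z, transP G d x z * zGreen G d (Fintype.card V) z y =
      (1 : Matrix V V ℝ) x y - (Fintype.card V : ℝ)⁻¹ := by
  have h := congrFun₂ (mul_pinv (posSemidef_one_sub_transP hreg hd).isHermitian) x y
  rwa [Matrix.sub_mul, Matrix.one_mul, Matrix.sub_apply, Matrix.sub_apply, Matrix.mul_apply,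
    kerProj_one_sub_transP_apply hconn hreg hd, ← zGreen_eq_pinv hconn hreg hd] at h

end GreenFunction

section PathSpace

variable {V : Type*} [MeasurableSpace V]

theorem preimage_comp_eq_of_forall_preimage_eq {ι : Type*} {f : V → V}
    (hf : ∀ s, MeasurableSet s → f ⁻¹' s = s) {E : Set (ι → V)} (hE : MeasurableSet E) :
    (fun ω ↦ f ∘ ω) ⁻¹' E = E := by
  have hle : (MeasurableSpace.pi : MeasurableSpace (ι → V)) ≤
      MeasurableSpace.invariants fun ω ↦ f ∘ ω := by
    refine iSup_le fun i ↦ ?_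
    rintro _ ⟨s, hs, rfl⟩
    refine ⟨measurable_pi_apply i hs, ?_⟩
    conv_rhs => rw [← hf s hs]
    rfl
  exact (hle E hE).2

theorem preimage_swap_eq {u v : V} (huv : ∀ s, MeasurableSet s → u ∈ s → v ∈ s) (s : Set V)
    (hs : MeasurableSet s) : Equiv.swap u v ⁻¹' s = s := by
  have hiff : u ∈ s ↔ v ∈ s :=
    ⟨huv s hs, fun hv ↦ by_contra fun hu ↦ huv sᶜ hs.compl hu hv⟩
  ext w
  rw [mem_preimage, Equiv.swap_apply_def]
  split_ifs with hwu hwv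
  · rw [hwu, hiff]
  · rw [hwv, hiff]
  · rfl

variable {G : SimpleGraph V} {d : ℕ} {W : V → Measure (ℕ → V)}

theorem IsSRW.measure_start (hW : IsSRW G d W) (x y : V) :
    W x {ω | ω 0 = y} = if y = x then 1 else 0 := by
  simpa using hW.2 x 0 fun _ ↦ y

-- If the σ-algebra did not separate `u` from `v`, exchanging them would preserve every event, yet
-- the walk from `u` almost surely starts at `u` and almost surely does not start at `v`.
theorem IsSRW.separatesPoints (hW : IsSRW G d W) : MeasurableSpace.SeparatesPoints V := by
  refine ⟨fun u v huv ↦ by_contra fun hne ↦ ?_⟩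
  let T := toMeasurable (W u) {ω | ω 0 = v}
  have hT : (fun ω ↦ Equiv.swap u v ∘ ω) ⁻¹' T = T :=
    preimage_comp_eq_of_forall_preimage_eq (preimage_swap_eq huv) (measurableSet_toMeasurable _ _)
  have hsub : {ω : ℕ → V | ω 0 = u} ⊆ T := fun ω (hω : ω 0 = u) ↦ by
    rw [← hT]
    refine subset_toMeasurable _ _ (?_ : Equiv.swap u v (ω 0) = v)
    rw [hω, Equiv.swap_apply_left]
  have hle := measure_mono (μ := W u) hsub
  rw [measure_toMeasurable, hW.measure_start, hW.measure_start, if_pos rfl,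
    if_neg (Ne.symm hne)] at hle
  exact one_ne_zero (nonpos_iff_eq_zero.1 hle)

theorem IsSRW.discreteMeasurableSpace [Countable V] (hW : IsSRW G d W) :
    DiscreteMeasurableSpace V := by
  have := hW.separatesPoints
  infer_instance

theorem IsSRW.ae_start [MeasurableSingletonClass V] (hW : IsSRW G d W) (x : V) :
    ∀ᵐ ω ∂W x, ω 0 = x := by
  have := hW.1 x
  have hm : MeasurableSet {ω : ℕ → V | ω 0 = x} :=
    measurable_pi_apply (X := fun _ ↦ V) 0 (measurableSet_singleton x)
  exact (prob_compl_eq_zero_iff hm).2 (by rw [hW.measure_start, if_pos rfl])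

end PathSpace

section HittingTime

variable {V : Type*} (A : Set V) (ω : ℕ → V) (n : ℕ)

/-- `stoppedPath A n ω` is the position `ω (n ∧ H_A)` at time `n` of the path stopped on
entering `A`. -/
noncomputable def stoppedPath (n : ℕ) (ω : ℕ → V) : V := ω (min (n : ℕ∞) (hitTime A ω)).toNat

variable {A ω n}

theorem natCast_lt_hitTime_iff : (n : ℕ∞) < hitTime A ω ↔ ∀ i ≤ n, ω i ∉ A := by
  rw [← not_le, hitTime, ← ENat.lt_add_one_iff (ENat.natCast_ne_top n), sInf_lt_iff]
  simp only [exists_mem_image, mem_ofPred_eq, not_exists, not_and]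
  refine forall_congr' fun i ↦ ?_
  rw [imp_not_comm]
  norm_cast
  rw [Nat.lt_succ_iff]

theorem stopAt_mem (h : hitTime A ω ≠ ⊤) : stopAt A ω ∈ A := by
  have hne : ((↑) '' {k | ω k ∈ A} : Set ℕ∞).Nonempty := by
    rw [nonempty_iff_ne_empty]
    intro he
    rw [hitTime, he, sInf_empty] at h
    exact h rfl
  obtain ⟨k, hk, hkH⟩ := csInf_mem hne
  rwa [stopAt, hitTime, ← hkH, ENat.toNat_natCast]

theorem stoppedPath_zero : stoppedPath A 0 ω = ω 0 := by simp [stoppedPath]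

theorem stoppedPath_eq_of_le (h : (n : ℕ∞) ≤ hitTime A ω) : stoppedPath A n ω = ω n := by
  rw [stoppedPath, min_eq_left h, ENat.toNat_natCast]

theorem stoppedPath_eq_stopAt (h : hitTime A ω ≤ n) : stoppedPath A n ω = stopAt A ω := by
  rw [stoppedPath, min_eq_right h, stopAt]

theorem comp_stoppedPath_succ (h : V → ℝ) : h (stoppedPath A (n + 1) ω) =
    h (stoppedPath A n ω) +
      {ω | (n : ℕ∞) < hitTime A ω}.indicator (fun ω ↦ h (ω (n + 1)) - h (ω n)) ω := by
  rcases lt_or_ge (n : ℕ∞) (hitTime A ω) with hlt | hge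
  · have hle : ((n + 1 : ℕ) : ℕ∞) ≤ hitTime A ω := by
      simpa using Order.add_one_le_of_lt hlt
    rw [indicator_of_mem (by exact hlt), stoppedPath_eq_of_le hle, stoppedPath_eq_of_le hlt.le]
    ring
  · have hge' : hitTime A ω ≤ (n + 1 : ℕ) := hge.trans (by simp)
    rw [indicator_of_notMem (by exact hge.not_gt), stoppedPath_eq_stopAt hge,
      stoppedPath_eq_stopAt hge', add_zero]

theorem tsum_indicator_lt_hitTime (h : hitTime A ω ≠ ⊤) :
    ∑' k : ℕ, {ω | (k : ℕ∞) < hitTime A ω}.indicator (fun _ ↦ (1 : ℝ)) ω =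
      (hitTime A ω).toNat := by
  have hiff (k : ℕ) : (k : ℕ∞) < hitTime A ω ↔ k < (hitTime A ω).toNat := by
    rw [← ENat.natCast_toNat h, Nat.cast_lt, ENat.toNat_natCast]
  rw [tsum_eq_sum (s := Finset.range (hitTime A ω).toNat) (by simp +contextual [hiff]),
    Finset.sum_congr rfl (g := fun _ ↦ (1 : ℝ)) (by simp +contextual [hiff])]
  simp

theorem measurable_of_measurableSet_natCast_lt {Ω : Type*} [MeasurableSpace Ω] {T : Ω → ℕ∞}
    (hT : ∀ n : ℕ, MeasurableSet {ω | (n : ℕ∞) < T ω}) : Measurable T := by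
  have heq_iff (t : ℕ∞) (n : ℕ) : t = n ↔ (∀ k < n, (k : ℕ∞) < t) ∧ ¬ (n : ℕ∞) < t := by
    cases t with
    | top => simp
    | coe a =>
      simp only [Nat.cast_inj, Nat.cast_lt, not_lt]
      exact ⟨fun h ↦ by simp [h], fun h ↦ le_antisymm h.2 (le_of_forall_lt h.1)⟩
  refine measurable_to_countable' fun t ↦ ?_
  induction t with
  | top =>
    convert! MeasurableSet.iInter hT using 1
    ext ω
    simp [ENat.eq_top_iff_forall_gt]
  | coe n =>
    convert! (MeasurableSet.iInter fun k ↦ .iInter fun _ : k < n ↦ hT k).diff (hT n) using 1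
    ext ω
    simp [heq_iff]

variable [MeasurableSpace V]

theorem measurable_eval_of_measurable {T : (ℕ → V) → ℕ} (hT : Measurable T) :
    Measurable fun ω : ℕ → V ↦ ω (T ω) := by
  have heval : Measurable fun q : ℕ × (ℕ → V) ↦ q.2 q.1 :=
    measurable_from_prod_countable_right fun n ↦ measurable_pi_apply n
  exact heval.comp (hT.prodMk measurable_id)

variable [DiscreteMeasurableSpace V]

theorem measurableSet_lt_hitTime (A : Set V) (n : ℕ) :
    MeasurableSet {ω : ℕ → V | (n : ℕ∞) < hitTime A ω} := by
  simp_rw [natCast_lt_hitTime_iff, ofPred_forall]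
  exact .iInter fun i ↦ .iInter fun _ ↦
    measurable_pi_apply (X := fun _ ↦ V) i (MeasurableSet.of_discrete (s := Aᶜ))

theorem measurable_hitTime (A : Set V) : Measurable (hitTime A) :=
  measurable_of_measurableSet_natCast_lt (measurableSet_lt_hitTime A)

theorem measurable_stopAt (A : Set V) : Measurable (stopAt A) :=
  measurable_eval_of_measurable (Measurable.of_discrete.comp (measurable_hitTime A))

theorem measurable_stoppedPath (A : Set V) (n : ℕ) : Measurable (stoppedPath A n) :=
  measurable_eval_of_measurable
    ((Measurable.of_discrete (f := fun t : ℕ∞ ↦ (min (n : ℕ∞) t).toNat)).comp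
      (measurable_hitTime A))

end HittingTime

section Markov

open Matrix PiNat

variable {V : Type*} [MeasurableSpace V]

/-- `ν` is the law of a Markov chain with transition matrix `P` and arbitrary initial
distribution, expressed through the probabilities of cylinders. -/
def IsMarkovLaw (P : Matrix V V ℝ) (ν : Measure (ℕ → V)) : Prop :=
  ∀ (n : ℕ) (q : ℕ → V),
    ν.real (cylinder q (n + 2)) = ν.real (cylinder q (n + 1)) * P (q n) (q (n + 1))

theorem IsSRW.isMarkovLaw [Fintype V] {G : SimpleGraph V} {d : ℕ} {W : V → Measure (ℕ → V)}
    (hW : IsSRW G d W) (x : V) : IsMarkovLaw (transP G d) (W x) := by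
  intro n q
  have hcyl (k : ℕ) : cylinder q (k + 1) = {ω | ∀ i ≤ k, ω i = q i} := by
    simp only [PiNat.cylinder, Nat.lt_succ_iff]
  have hstep : (srwStep G d (q n) (q (n + 1))).toReal = transP G d (q n) (q (n + 1)) := by
    simp only [srwStep, transP, of_apply]
    split_ifs <;> simp
  rw [hcyl, hcyl, measureReal_def, measureReal_def, hW.2, hW.2, Finset.prod_range_succ,
    ← mul_assoc, ENNReal.toReal_mul, hstep]

theorem measurableSet_cylinder [MeasurableSingletonClass V] (p : ℕ → V) (n : ℕ) :
    MeasurableSet (cylinder p n) := by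
  rw [cylinder_eq_pi]
  exact .pi (Finset.countable_toSet _) fun i _ ↦ measurableSet_singleton (p i)

theorem integrable_comp_of_finite [Finite V] [MeasurableSingletonClass V] {Ω : Type*}
    [MeasurableSpace Ω]
    (ν : Measure Ω) [IsFiniteMeasure ν] {X : Ω → V} (hX : Measurable X) (h : V → ℝ) :
    Integrable (fun ω ↦ h (X ω)) ν :=
  (Integrable.of_finite (f := h)).comp_measurable hX

variable [Fintype V]

theorem integral_comp_eq_sum [MeasurableSingletonClass V] {Ω : Type*} [MeasurableSpace Ω]
    (ν : Measure Ω) [IsFiniteMeasure ν] {X : Ω → V} (hX : Measurable X) (h : V → ℝ) :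
    ∫ ω, h (X ω) ∂ν = ∑ v, ν.real (X ⁻¹' {v}) * h v := by
  rw [← integral_map (f := h) hX.aemeasurable (measurable_of_countable h).aestronglyMeasurable,
    integral_fintype .of_finite]
  simp_rw [map_measureReal_apply hX (measurableSet_singleton _), smul_eq_mul]

theorem setIntegral_eq_sum_fiber [MeasurableSingletonClass V] {Ω : Type*} [MeasurableSpace Ω]
    {ν : Measure Ω} {r : Ω → V} (hr : Measurable r) {E : Set Ω} (hE : MeasurableSet E) {f : Ω → ℝ}
    (hf : Integrable f ν) : ∫ ω in E, f ω ∂ν = ∑ p, ∫ ω in E ∩ r ⁻¹' {p}, f ω ∂ν := by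
  rw [← integral_iUnion_fintype (fun p ↦ hE.inter (hr (measurableSet_singleton p)))
    (fun p q hpq ↦ ((pairwise_disjoint_fiber r hpq).mono inter_subset_right inter_subset_right))
    fun p ↦ hf.integrableOn, ← inter_iUnion, ← preimage_iUnion, iUnion_of_singleton, preimage_univ,
    inter_univ]

variable [DiscreteMeasurableSpace V] {P : Matrix V V ℝ} {ν : Measure (ℕ → V)}
  [IsFiniteMeasure ν]

theorem IsMarkovLaw.setIntegral_cylinder (hν : IsMarkovLaw P ν) (h : V → ℝ) (n : ℕ) (p : ℕ → V) :
    ∫ ω in cylinder p (n + 1), h (ω (n + 1)) ∂ν =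
      ∫ ω in cylinder p (n + 1), (P *ᵥ h) (ω n) ∂ν := by
  have hstep (v : V) : (ν.restrict (cylinder p (n + 1))).real ((fun ω ↦ ω (n + 1)) ⁻¹' {v}) =
      ν.real (cylinder p (n + 1)) * P (p n) v := by
    let q := Function.update p (n + 1) v
    have hq : cylinder q (n + 1) = cylinder p (n + 1) :=
      mem_cylinder_iff_eq.1 (update_mem_cylinder p (n + 1) v)
    have hinter : (fun ω ↦ ω (n + 1)) ⁻¹' {v} ∩ cylinder p (n + 1) = cylinder q (n + 2) := by
      ext ω
      rw [← hq]
      simp only [mem_inter_iff, mem_preimage, mem_singleton_iff, mem_cylinder_iff,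
        Nat.forall_lt_succ_right (n := n + 1), and_comm, q, Function.update_self]
    rw [measureReal_restrict_apply (measurable_pi_apply (n + 1) (measurableSet_singleton v)),
      hinter, hν, hq]
    simp [q]
  calc ∫ ω in cylinder p (n + 1), h (ω (n + 1)) ∂ν
      = ∑ v, ν.real (cylinder p (n + 1)) * P (p n) v * h v := by
        simp_rw [integral_comp_eq_sum _ (measurable_pi_apply (n + 1)), hstep]
    _ = ∫ _ in cylinder p (n + 1), (P *ᵥ h) (p n) ∂ν := by
        simp [mulVec, dotProduct, Finset.mul_sum, mul_assoc]
    _ = ∫ ω in cylinder p (n + 1), (P *ᵥ h) (ω n) ∂ν :=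
        setIntegral_congr_fun (measurableSet_cylinder p _) fun ω hω ↦ by
          rw [hω n n.lt_succ_self]

theorem IsMarkovLaw.setIntegral_of_cylinder_subset (hν : IsMarkovLaw P ν) (h : V → ℝ) {n : ℕ}
    {E : Set (ℕ → V)} (hE : MeasurableSet E) (hEn : ∀ ω ∈ E, cylinder ω (n + 1) ⊆ E) :
    ∫ ω in E, h (ω (n + 1)) ∂ν = ∫ ω in E, (P *ᵥ h) (ω n) ∂ν := by
  let r : (ℕ → V) → Fin (n + 1) → V := fun ω i ↦ ω i
  have hr : Measurable r := measurable_pi_lambda _ fun i ↦ measurable_pi_apply (i : ℕ)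
  rw [setIntegral_eq_sum_fiber hr hE
      (integrable_comp_of_finite ν (measurable_pi_apply (n + 1)) h),
    setIntegral_eq_sum_fiber hr hE
      (integrable_comp_of_finite ν (measurable_pi_apply n) (P *ᵥ h))]
  refine Finset.sum_congr rfl fun p _ ↦ ?_
  obtain hempty | ⟨ω, hω, rfl⟩ := (E ∩ r ⁻¹' {p}).eq_empty_or_nonempty
  · simp [hempty]
  · have hfiber : r ⁻¹' {r ω} = cylinder ω (n + 1) := by
      ext ω'
      simp [r, funext_iff, Fin.forall_iff]
    rw [hfiber, inter_eq_right.2 (hEn ω hω)]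
    exact hν.setIntegral_cylinder h n ω

end Markov

section HittingTimeMoments

variable {V : Type*} [MeasurableSpace V] {ν : Measure (ℕ → V)} [IsFiniteMeasure ν] {A : Set V}

theorem ae_hitTime_ne_top
    (hs : Summable fun k : ℕ ↦ ν.real {ω | (k : ℕ∞) < hitTime A ω}) :
    ∀ᵐ ω ∂ν, hitTime A ω ≠ ⊤ := by
  have hzero : ν.real {ω | hitTime A ω = ⊤} ≤ 0 :=
    ge_of_tendsto' hs.tendsto_atTop_zero fun k ↦ measureReal_mono fun ω (hω : _ = ⊤) ↦ by
      simp [hω]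
  have hnull := (measureReal_eq_zero_iff).1 (hzero.antisymm measureReal_nonneg)
  rw [ae_iff]
  simpa using hnull

theorem hasSum_integral_hitTime [DiscreteMeasurableSpace V]
    (hs : Summable fun k : ℕ ↦ ν.real {ω | (k : ℕ∞) < hitTime A ω}) :
    HasSum (fun k : ℕ ↦ ν.real {ω | (k : ℕ∞) < hitTime A ω})
      (∫ ω, ((hitTime A ω).toNat : ℝ) ∂ν) := by
  have hint (k : ℕ) :
      ∫ ω, {ω | (k : ℕ∞) < hitTime A ω}.indicator (fun _ ↦ (1 : ℝ)) ω ∂ν =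
        ν.real {ω | (k : ℕ∞) < hitTime A ω} :=
    integral_indicator_one (measurableSet_lt_hitTime A k)
  have hsum := hasSum_integral_of_summable_integral_norm (μ := ν)
    (F := fun (k : ℕ) ↦ {ω | (k : ℕ∞) < hitTime A ω}.indicator fun _ ↦ (1 : ℝ))
    (fun k ↦ (integrable_const 1).indicator (measurableSet_lt_hitTime A k))
    (by simpa [norm_indicator_eq_indicator_norm, hint] using hs)
  simp_rw [hint] at hsum
  rwa [integral_congr_ae ((ae_hitTime_ne_top hs).mono fun ω hω ↦
    tsum_indicator_lt_hitTime hω)] at hsum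

end HittingTimeMoments

section Dynkin

open Matrix PiNat

variable {V : Type*} [Fintype V] [MeasurableSpace V] [DiscreteMeasurableSpace V]
  {P : Matrix V V ℝ} {ν : Measure (ℕ → V)} {A : Set V}

theorem IsMarkovLaw.setIntegral_lt_hitTime [IsFiniteMeasure ν] (hν : IsMarkovLaw P ν) (h : V → ℝ)
    (A : Set V) (n : ℕ) :
    ∫ ω in {ω | (n : ℕ∞) < hitTime A ω}, h (ω (n + 1)) ∂ν =
      ∫ ω in {ω | (n : ℕ∞) < hitTime A ω}, (P *ᵥ h) (ω n) ∂ν := by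
  refine hν.setIntegral_of_cylinder_subset h (measurableSet_lt_hitTime A n) fun ω hω ω' hω' ↦ ?_
  refine natCast_lt_hitTime_iff.2 fun i hi ↦ ?_
  rw [hω' i (Nat.lt_succ_of_le hi)]
  exact natCast_lt_hitTime_iff.1 hω i hi

theorem IsMarkovLaw.integral_comp_stoppedPath [IsFiniteMeasure ν] (hν : IsMarkovLaw P ν)
    {h : V → ℝ} {c : ℝ} (hh : ∀ z ∉ A, (P *ᵥ h) z = h z + c) (n : ℕ) :
    ∫ ω, h (stoppedPath A n ω) ∂ν =
      ∫ ω, h (ω 0) ∂ν +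
        c * ∑ k ∈ Finset.range n, ν.real {ω | (k : ℕ∞) < hitTime A ω} := by
  have hint (k : ℕ) (f : V → ℝ) : Integrable (fun ω : ℕ → V ↦ f (ω k)) ν :=
    integrable_comp_of_finite ν (measurable_pi_apply k) f
  induction n with
  | zero => simp [stoppedPath_zero]
  | succ n ih =>
    have hmeas := measurableSet_lt_hitTime A n
    have hincr : ∫ ω in {ω | (n : ℕ∞) < hitTime A ω}, (h (ω (n + 1)) - h (ω n)) ∂ν =
        c * ν.real {ω | (n : ℕ∞) < hitTime A ω} := by
      rw [integral_sub (hint _ h).integrableOn (hint _ h).integrableOn,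
        hν.setIntegral_lt_hitTime, ← integral_sub (hint _ _).integrableOn (hint _ h).integrableOn]
      calc ∫ ω in {ω | (n : ℕ∞) < hitTime A ω}, ((P *ᵥ h) (ω n) - h (ω n)) ∂ν
          = ∫ _ in {ω : ℕ → V | (n : ℕ∞) < hitTime A ω}, c ∂ν :=
            setIntegral_congr_fun hmeas fun ω hω ↦ by
              rw [hh _ (natCast_lt_hitTime_iff.1 hω n le_rfl)]
              ring
        _ = c * ν.real {ω | (n : ℕ∞) < hitTime A ω} := by
              rw [setIntegral_const, smul_eq_mul, mul_comm]
    have hdiff : Integrable (fun ω ↦ h (ω (n + 1)) - h (ω n)) ν := (hint _ h).sub (hint _ h)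
    simp_rw [comp_stoppedPath_succ]
    rw [integral_add (integrable_comp_of_finite ν (measurable_stoppedPath A n) h)
      (hdiff.indicator hmeas), integral_indicator hmeas, hincr, ih,
      Finset.sum_range_succ]
    ring

theorem IsMarkovLaw.summable_lt_hitTime [IsFiniteMeasure ν] (hν : IsMarkovLaw P ν)
    {h : V → ℝ} {c : ℝ} (hc : 0 < c) (hh : ∀ z ∉ A, (P *ᵥ h) z = h z + c) :
    Summable fun k : ℕ ↦ ν.real {ω | (k : ℕ∞) < hitTime A ω} := by
  obtain ⟨C, hC⟩ := (Set.finite_range h).bddAbove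
  have hle (v : V) : h v ≤ C := hC ⟨v, rfl⟩
  refine summable_of_sum_range_le (c := (ν.real univ * C - ∫ ω, h (ω 0) ∂ν) / c)
    (fun _ ↦ measureReal_nonneg) fun n ↦ ?_
  have hbound : ∫ ω, h (stoppedPath A n ω) ∂ν ≤ ν.real univ * C := by
    simpa using integral_mono (integrable_comp_of_finite ν (measurable_stoppedPath A n) h)
      (integrable_const C) fun ω ↦ hle _
  rw [hν.integral_comp_stoppedPath hh] at hbound
  rw [le_div_iff₀ hc]
  linarith

/- If `P h = h + c` off `A`, then `h (X_{n ∧ H}) - c (n ∧ H)` is a martingale and `n → ∞` is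
optional stopping. -/
theorem IsMarkovLaw.integral_comp_stopAt [IsFiniteMeasure ν] (hν : IsMarkovLaw P ν)
    {h : V → ℝ} {c : ℝ} (hc : 0 < c) (hh : ∀ z ∉ A, (P *ᵥ h) z = h z + c) :
    ∫ ω, h (stopAt A ω) ∂ν = ∫ ω, h (ω 0) ∂ν + c * ∫ ω, ((hitTime A ω).toNat : ℝ) ∂ν := by
  have hs := hν.summable_lt_hitTime hc hh
  obtain ⟨C, hC⟩ := (Set.finite_range fun v ↦ ‖h v‖).bddAbove
  have hdom : Tendsto (fun n ↦ ∫ ω, h (stoppedPath A n ω) ∂ν) atTop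
      (nhds (∫ ω, h (stopAt A ω) ∂ν)) := by
    refine tendsto_integral_of_dominated_convergence (fun _ ↦ C)
      (fun n ↦ (integrable_comp_of_finite ν (measurable_stoppedPath A n) h).aestronglyMeasurable)
      (integrable_const C) (fun n ↦ .of_forall fun ω ↦ hC ⟨_, rfl⟩)
      ((ae_hitTime_ne_top hs).mono fun ω hω ↦ tendsto_const_nhds.congr' ?_)
    filter_upwards [eventually_ge_atTop (hitTime A ω).toNat] with n hn
    rw [stoppedPath_eq_stopAt (ENat.natCast_toNat hω ▸ ENat.natCast_le_natCast.2 hn)]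
  refine tendsto_nhds_unique hdom ?_
  simp_rw [hν.integral_comp_stoppedPath hh]
  exact ((hasSum_integral_hitTime hs).tendsto_sum_nat.const_mul c).const_add _

end Dynkin

section ConditionalVariance

theorem condVar_ae_eq_variance_sub {Ω : Type*} {m m₀ : MeasurableSpace Ω} {μ : Measure Ω}
    [IsProbabilityMeasure μ] {X S : Ω → ℝ} (hm : m ≤ m₀) (hX : Measurable X)
    (hXint : Integrable X μ) (hS : StronglyMeasurable[m] S) (hSint : Integrable S μ)
    (hindep : Indep (MeasurableSpace.comap (X - S) inferInstance) m μ) :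
    Var[X; μ | m] =ᵐ[μ] fun _ ↦ Var[X - S; μ] := by
  have hR : Measurable (X - S) := hX.sub (hS.mono hm).measurable
  have hRm : StronglyMeasurable[MeasurableSpace.comap (X - S) inferInstance] (X - S) :=
    (comap_measurable (X - S)).stronglyMeasurable
  have hcondExp : μ[X | m] =ᵐ[μ] fun ω ↦ μ[X - S] + S ω := by
    have hadd := condExp_add (hXint.sub hSint) hSint m
    rw [sub_add_cancel, condExp_of_stronglyMeasurable hm hS hSint] at hadd
    filter_upwards [hadd, condExp_indep_eq hR.comap_le hm hRm hindep] with ω hω hω'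
    rw [hω, Pi.add_apply, hω']
  have hsq : (X - μ[X | m]) ^ 2 =ᵐ[μ] fun ω ↦ ((X - S) ω - μ[X - S]) ^ 2 := by
    filter_upwards [hcondExp] with ω hω
    simp only [Pi.pow_apply, Pi.sub_apply, hω]
    ring
  refine (condExp_congr_ae hsq).trans ?_
  rw [variance_eq_integral hR.aemeasurable]
  exact condExp_indep_eq hR.comap_le hm ((hRm.sub stronglyMeasurable_const).pow 2) hindep

end ConditionalVariance

section GaussianField

variable {I : Type*} {K : I → I → ℝ} {μ : Measure (I → ℝ)}

theorem IsGaussianField.isGaussianProcess (hμ : IsGaussianField μ K) :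
    IsGaussianProcess (fun i (ω : I → ℝ) ↦ ω i) μ := by
  refine ⟨fun J ↦ ⟨isGaussian_of_map_eq_gaussianReal fun L ↦ ?_⟩⟩
  let c : I →₀ ℝ := (Finsupp.equivFunOnFinite.symm fun j : J ↦ L (Pi.single j 1)).embDomain
    (.subtype _)
  have hL (ω : I → ℝ) : L (J.restrict ω) = ∑ i ∈ c.support, c i * ω i := by
    change _ = c.sum fun i a ↦ a * ω i
    rw [Finsupp.sum_embDomain, Finsupp.sum_fintype _ _ (by simp),
      pi_eq_sum_univ' (J.restrict ω), map_sum]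
    simp [mul_comm]
  have hmap := hμ.2 c
  simp_rw [← hL] at hmap
  exact ⟨_, _, (Measure.map_map L.continuous.measurable (Finset.measurable_restrict J)).trans hmap⟩

theorem IsGaussianField.memLp_two (hμ : IsGaussianField μ K) (i : I) :
    MemLp (fun ω : I → ℝ ↦ ω i) 2 μ :=
  (hμ.isGaussianProcess.hasGaussianLaw_eval i).memLp_two

theorem IsGaussianField.variance_linear (hμ : IsGaussianField μ K)
    (hK : Matrix.PosSemidef (Matrix.of K)) (c : I →₀ ℝ) :
    Var[fun ω : I → ℝ ↦ c.sum fun i a ↦ a * ω i; μ] =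
      c.sum fun i a ↦ c.sum fun j b ↦ a * b * K i j := by
  have hmeas : Measurable fun ω : I → ℝ ↦ c.sum fun i a ↦ a * ω i :=
    Finset.measurable_fun_sum _ fun i _ ↦ (measurable_pi_apply i).const_mul _
  have hnonneg : 0 ≤ c.sum fun i a ↦ c.sum fun j b ↦ a * b * K i j := by
    simpa [mul_right_comm] using hK.2 c
  rw [← variance_id_map hmeas.aemeasurable]
  exact (congrArg _ (hμ.2 c)).trans (variance_id_gaussianReal.trans (Real.coe_toNNReal _ hnonneg))

theorem IsGaussianField.variance_eval (hμ : IsGaussianField μ K)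
    (hK : Matrix.PosSemidef (Matrix.of K)) (i : I) : Var[fun ω : I → ℝ ↦ ω i; μ] = K i i := by
  simpa using hμ.variance_linear hK (Finsupp.single i 1)

theorem IsGaussianField.covariance_eval (hμ : IsGaussianField μ K)
    (hK : Matrix.PosSemidef (Matrix.of K)) (i j : I) :
    cov[fun ω : I → ℝ ↦ ω i, fun ω ↦ ω j; μ] = K i j := by
  have := hμ.1
  have hsymm : K j i = K i j := hK.1.apply i j
  have hadd := hμ.variance_linear hK (Finsupp.single i 1 + Finsupp.single j 1)
  simp only [zero_mul, implies_true, add_mul, Finsupp.sum_add_index', Finsupp.sum_single_index,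
    one_mul, mul_zero, mul_add, mul_one, Finsupp.sum_add] at hadd
  have hpolar := variance_fun_add (hμ.memLp_two i) (hμ.memLp_two j)
  rw [hμ.variance_eval hK, hμ.variance_eval hK] at hpolar
  linarith

/-- `linearPredictor b ω = ∑ v, b v * ω v` predicts a value of the field `ω` from its values on the
support of `b`. -/
noncomputable def linearPredictor (b : I →₀ ℝ) (ω : I → ℝ) : ℝ := b.sum fun v c ↦ c * ω v

variable {A : Set I} {b : I →₀ ℝ} {x : I}

theorem IsGaussianField.memLp_two_linearPredictor (hμ : IsGaussianField μ K) (b : I →₀ ℝ) :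
    MemLp (linearPredictor b) 2 μ :=
  memLp_finsetSum _ fun v _ ↦ (hμ.memLp_two v).const_mul (b v)

theorem IsGaussianField.covariance_linearPredictor_left (hμ : IsGaussianField μ K) (b : I →₀ ℝ)
    {Y : (I → ℝ) → ℝ} (hY : MemLp Y 2 μ) :
    cov[linearPredictor b, Y; μ] = b.sum fun v c ↦ c * cov[fun ω ↦ ω v, Y; μ] := by
  have := hμ.1
  simp only [← covariance_const_mul_left]
  exact covariance_fun_sum_left' (fun v _ ↦ (hμ.memLp_two v).const_mul (b v)) hY

theorem IsGaussianField.covariance_sub_linearPredictor (hμ : IsGaussianField μ K)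
    (hK : Matrix.PosSemidef (Matrix.of K)) (b : I →₀ ℝ) (x y : I) :
    cov[(fun ω ↦ ω x) - linearPredictor b, fun ω ↦ ω y; μ] =
      K x y - b.sum fun v c ↦ c * K v y := by
  have := hμ.1
  rw [covariance_sub_left (hμ.memLp_two x) (hμ.memLp_two_linearPredictor b) (hμ.memLp_two y),
    hμ.covariance_linearPredictor_left b (hμ.memLp_two y)]
  simp_rw [hμ.covariance_eval hK]

theorem IsGaussianField.isGaussianProcess_sub_linearPredictor (hμ : IsGaussianField μ K)
    (A : Set I) (b : I →₀ ℝ) (x : I) :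
    IsGaussianProcess (Sum.elim (fun _ : Unit ↦ (fun ω ↦ ω x) - linearPredictor b)
      fun (a : A) ω ↦ ω a) μ := by
  refine hμ.isGaussianProcess.of_isGaussianProcess ?_
  rintro (_ | a)
  · refine ⟨insert x b.support, .proj ⟨x, Finset.mem_insert_self x _⟩ -
      ∑ v : b.support, b v • .proj ⟨v, Finset.mem_insert_of_mem v.2⟩, fun ω ↦ ?_⟩
    simp [linearPredictor, Finsupp.sum, ← Finset.sum_attach b.support fun v ↦ b v * ω v]
  · exact ⟨{(a : I)}, .proj ⟨a, Finset.mem_singleton_self _⟩, fun ω ↦ rfl⟩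

theorem IsGaussianField.indepFun_sub_linearPredictor (hμ : IsGaussianField μ K)
    (hK : Matrix.PosSemidef (Matrix.of K)) (hb : ∀ a ∈ A, K x a = b.sum fun v c ↦ c * K v a) :
    IndepFun ((fun ω ↦ ω x) - linearPredictor b) (domRestrict A) μ := by
  have hprocess := hμ.isGaussianProcess_sub_linearPredictor A b x
  have hindep := hprocess.indepFun_of_covariance_eq_zero (fun u ↦ hprocess.aemeasurable (.inl u))
    (fun a ↦ hprocess.aemeasurable (.inr a)) fun _ a ↦ by
      rw [hμ.covariance_sub_linearPredictor hK, hb a a.2, sub_self]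
  exact hindep.comp (measurable_pi_apply ()) measurable_id

theorem measurable_linearPredictor (hb : ↑b.support ⊆ A) :
    Measurable[MeasurableSpace.comap (domRestrict A) inferInstance] (linearPredictor b) :=
  Finset.measurable_fun_sum _ fun v hv ↦
    ((measurable_pi_apply (⟨v, hb hv⟩ : A)).comp (comap_measurable (domRestrict A))).const_mul _

theorem IsGaussianField.variance_sub_linearPredictor (hμ : IsGaussianField μ K)
    (hK : Matrix.PosSemidef (Matrix.of K)) (hsupp : ↑b.support ⊆ A)
    (hb : ∀ a ∈ A, K x a = b.sum fun v c ↦ c * K v a) :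
    Var[(fun ω ↦ ω x) - linearPredictor b; μ] = K x x - b.sum fun v c ↦ c * K v x := by
  have := hμ.1
  have hpredictor := hμ.memLp_two_linearPredictor b
  have hresidual := (hμ.memLp_two x).sub hpredictor
  have horth : cov[(fun ω ↦ ω x) - linearPredictor b, linearPredictor b; μ] = 0 := by
    rw [covariance_comm, hμ.covariance_linearPredictor_left b hresidual]
    refine Finset.sum_eq_zero fun v hv ↦ ?_
    have hv_zero : cov[fun ω ↦ ω v, (fun ω ↦ ω x) - linearPredictor b; μ] = 0 := by
      rw [covariance_comm, hμ.covariance_sub_linearPredictor hK, hb v (hsupp hv), sub_self]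
    simp only [hv_zero, mul_zero]
  rw [← covariance_self hresidual.aemeasurable, covariance_sub_right hresidual (hμ.memLp_two x)
    hpredictor, horth, sub_zero, hμ.covariance_sub_linearPredictor hK]

theorem IsGaussianField.condVar_ae_eq (hμ : IsGaussianField μ K)
    (hK : Matrix.PosSemidef (Matrix.of K)) (hsupp : ↑b.support ⊆ A)
    (hb : ∀ a ∈ A, K x a = b.sum fun v c ↦ c * K v a) :
    Var[fun ω ↦ ω x; μ | MeasurableSpace.comap (domRestrict A) inferInstance] =ᵐ[μ]
      fun _ ↦ K x x - b.sum fun v c ↦ c * K v x := by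
  have := hμ.1
  rw [← hμ.variance_sub_linearPredictor hK hsupp hb]
  exact condVar_ae_eq_variance_sub A.measurable_restrict.comap_le (measurable_pi_apply x)
    ((hμ.memLp_two x).integrable one_le_two) (measurable_linearPredictor hsupp).stronglyMeasurable
    ((hμ.memLp_two_linearPredictor b).integrable one_le_two) (hμ.indepFun_sub_linearPredictor hK hb)

end GaussianField

section ConditionalMean

variable {V : Type*} [Fintype V]

/-- `uniformMean f = E_π[f]`, the mean of `f` under the uniform distribution `π` on the vertices. -/
noncomputable def uniformMean (f : V → ℝ) : ℝ := (Fintype.card V : ℝ)⁻¹ * ∑ z, f z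

variable [MeasurableSpace V]

/-- `meanHitTime A W z = E_z[H_A]`; a path that never enters `A` counts as `0`. -/
noncomputable def meanHitTime (A : Set V) (W : V → Measure (ℕ → V)) (z : V) : ℝ :=
  ∫ p, ((hitTime A p).toNat : ℝ) ∂W z

/-- The coefficients `b v = P_x[X_{H_A} = v] - (E_x[H_A] / E_π[H_A]) P_π[X_{H_A} = v]` of the
conditional mean of the zero-average Gaussian free field at `x` given its values on `A`. -/
noncomputable def condMeanWeight (A : Set V) (W : V → Measure (ℕ → V)) (x : V) : V →₀ ℝ :=
  Finsupp.equivFunOnFinite.symm fun v ↦ (W x).real (stopAt A ⁻¹' {v}) -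
    meanHitTime A W x / uniformMean (meanHitTime A W) *
      uniformMean fun z ↦ (W z).real (stopAt A ⁻¹' {v})

variable {A : Set V} {W : V → Measure (ℕ → V)}

theorem support_condMeanWeight_subset (hA : ∀ z, ∀ᵐ p ∂W z, stopAt A p ∈ A) (x : V) :
    ↑(condMeanWeight A W x).support ⊆ A := by
  intro v hv
  by_contra hvA
  have hnull (z : V) : (W z).real (stopAt A ⁻¹' {v}) = 0 := by
    have hzero : W z (stopAt A ⁻¹' {v}) = 0 :=
      measure_mono_null (fun p (hp : stopAt A p = v) hpA ↦ hvA (hp ▸ hpA)) (hA z)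
    rw [measureReal_def, hzero, ENNReal.toReal_zero]
  simp [condMeanWeight, hnull, uniformMean] at hv

theorem sum_condMeanWeight_mul [DiscreteMeasurableSpace V] [∀ z, IsFiniteMeasure (W z)]
    (x : V) (f : V → ℝ) :
    ((condMeanWeight A W x).sum fun v c ↦ c * f v) = ∫ p, f (stopAt A p) ∂W x -
      meanHitTime A W x / uniformMean (meanHitTime A W) *
        uniformMean fun z ↦ ∫ p, f (stopAt A p) ∂W z := by
  simp_rw [integral_comp_eq_sum _ (measurable_stopAt A)]
  rw [Finsupp.sum_fintype _ _ (by simp)]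
  simp only [condMeanWeight, Finsupp.equivFunOnFinite_symm_apply_apply, uniformMean, sub_mul,
    Finset.sum_sub_distrib]
  rw [Finset.sum_comm]
  simp only [mul_assoc, Finset.mul_sum, Finset.sum_mul]

end ConditionalMean

section HittingTimeOfWalk

variable {V : Type*} {G : SimpleGraph V} {d : ℕ}

theorem ne_zero_of_isReg [Finite V] [Nontrivial V] (hconn : G.Connected) (hreg : IsReg G d) :
    d ≠ 0 := by
  have := Fintype.ofFinite V
  obtain ⟨v⟩ := hconn.nonempty
  rw [← degree_eq_of_isReg hreg v]
  exact (hconn.preconnected.degree_pos_of_nontrivial v).ne'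

theorem transP_mulVec_zGreen [Fintype V] (hconn : G.Connected) (hreg : IsReg G d)
    (hd : d ≠ 0) {a z : V} (hza : z ≠ a) :
    (transP G d).mulVec (zGreen G d (Fintype.card V) · a) z =
      zGreen G d (Fintype.card V) z a + (Fintype.card V : ℝ)⁻¹ := by
  have h := zGreen_sub_sum_transP_mul hconn hreg hd z a
  rw [Matrix.one_apply_ne hza] at h
  rw [Matrix.mulVec, dotProduct]
  linarith

variable [Finite V] [MeasurableSpace V] [DiscreteMeasurableSpace V]
  {W : V → Measure (ℕ → V)} {A : Set V}

theorem IsSRW.summable_lt_hitTime (hW : IsSRW G d W) (hconn : G.Connected) (hreg : IsReg G d)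
    (hd : d ≠ 0) (hA : A.Nonempty) (x : V) :
    Summable fun k : ℕ ↦ (W x).real {p | (k : ℕ∞) < hitTime A p} := by
  obtain ⟨a, ha⟩ := hA
  have := hW.1 x
  have := hconn.nonempty
  have := Fintype.ofFinite V
  exact (hW.isMarkovLaw x).summable_lt_hitTime (c := (Fintype.card V : ℝ)⁻¹) (by positivity)
    fun z hz ↦ transP_mulVec_zGreen hconn hreg hd (ne_of_mem_of_not_mem ha hz).symm

theorem IsSRW.ae_stopAt_mem (hW : IsSRW G d W) (hconn : G.Connected) (hreg : IsReg G d)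
    (hd : d ≠ 0) (hA : A.Nonempty) (x : V) : ∀ᵐ p ∂W x, stopAt A p ∈ A := by
  have := hW.1 x
  exact (ae_hitTime_ne_top (hW.summable_lt_hitTime hconn hreg hd hA x)).mono fun _ ↦ stopAt_mem

theorem IsSRW.one_le_meanHitTime (hW : IsSRW G d W) (hconn : G.Connected) (hreg : IsReg G d)
    (hd : d ≠ 0) (hA : A.Nonempty) {z : V} (hz : z ∉ A) : 1 ≤ meanHitTime A W z := by
  have := hW.1 z
  have hsum := hasSum_integral_hitTime (hW.summable_lt_hitTime hconn hreg hd hA z)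
  have hae : {p | ((0 : ℕ) : ℕ∞) < hitTime A p} =ᵐ[W z] univ :=
    eventuallyEq_univ.2 <| (hW.ae_start z).mono fun p hp ↦
      natCast_lt_hitTime_iff.2 fun i hi ↦ by rwa [Nat.le_zero.1 hi, hp]
  calc 1 = (W z).real {p | ((0 : ℕ) : ℕ∞) < hitTime A p} := by
        rw [measureReal_congr hae, probReal_univ]
    _ ≤ meanHitTime A W z := le_hasSum hsum 0 fun _ _ ↦ measureReal_nonneg

end HittingTimeOfWalk

section StoppedGreenFunction

variable {V : Type*} [Fintype V] [MeasurableSpace V] [DiscreteMeasurableSpace V]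
  {G : SimpleGraph V} {d : ℕ} {W : V → Measure (ℕ → V)} {A : Set V}

theorem IsSRW.integral_zGreen_stopAt (hW : IsSRW G d W) (hconn : G.Connected) (hreg : IsReg G d)
    (hd : d ≠ 0) {a : V} (ha : a ∈ A) (x : V) :
    ∫ p, zGreen G d (Fintype.card V) (stopAt A p) a ∂W x =
      zGreen G d (Fintype.card V) x a + (Fintype.card V : ℝ)⁻¹ * meanHitTime A W x := by
  have := hW.1 x
  have := hconn.nonempty
  have hstart : ∫ p, zGreen G d (Fintype.card V) (p 0) a ∂W x =
      zGreen G d (Fintype.card V) x a := by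
    rw [integral_congr_ae ((hW.ae_start x).mono fun p hp ↦
      congrArg (zGreen G d (Fintype.card V) · a) hp), integral_const, probReal_univ, one_smul]
  rw [(hW.isMarkovLaw x).integral_comp_stopAt (by positivity) fun z hz ↦
    transP_mulVec_zGreen hconn hreg hd (ne_of_mem_of_not_mem ha hz).symm, hstart, meanHitTime]

theorem IsSRW.uniformMean_meanHitTime_pos (hW : IsSRW G d W) (hconn : G.Connected)
    (hreg : IsReg G d) (hd : d ≠ 0) (hA : A.Nonempty) (hAne : A ≠ univ) :
    0 < uniformMean (meanHitTime A W) := by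
  have := hconn.nonempty
  obtain ⟨z, hz⟩ := (ne_univ_iff_exists_notMem A).1 hAne
  have hsum : 0 < ∑ z, meanHitTime A W z :=
    Finset.sum_pos' (fun _ _ ↦ integral_nonneg fun _ ↦ Nat.cast_nonneg _)
      ⟨z, Finset.mem_univ z, one_pos.trans_le (hW.one_le_meanHitTime hconn hreg hd hA hz)⟩
  rw [uniformMean]
  positivity

theorem IsSRW.sum_condMeanWeight_mul_zGreen (hW : IsSRW G d W) (hconn : G.Connected)
    (hreg : IsReg G d) (hd : d ≠ 0) (hAne : A ≠ univ) {a : V} (ha : a ∈ A) (x : V) :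
    ((condMeanWeight A W x).sum fun v c ↦ c * zGreen G d (Fintype.card V) v a) =
      zGreen G d (Fintype.card V) x a := by
  have := hW.1
  have hmean : (uniformMean fun z ↦ ∫ p, zGreen G d (Fintype.card V) (stopAt A p) a ∂W z) =
      (Fintype.card V : ℝ)⁻¹ * uniformMean (meanHitTime A W) := by
    simp_rw [hW.integral_zGreen_stopAt hconn hreg hd ha, uniformMean, Finset.sum_add_distrib,
      sum_zGreen hconn hreg hd, zero_add, Finset.mul_sum]
  have hpos := hW.uniformMean_meanHitTime_pos hconn hreg hd ⟨a, ha⟩ hAne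
  rw [sum_condMeanWeight_mul, hmean, hW.integral_zGreen_stopAt hconn hreg hd ha]
  field_simp
  ring

end StoppedGreenFunction

end GFF

theorem gff_conditional_variance_general
    (d : ℕ) (V : Type*) [Fintype V] [MeasurableSpace V]
    (G : SimpleGraph V) (hconn : G.Connected) (hreg : GFF.IsReg G d)
    (μ : Measure (V → ℝ)) (hμ : GFF.IsGaussianField μ (GFF.zGreen G d (Fintype.card V)))
    (W : V → Measure (ℕ → V)) (hW : GFF.IsSRW G d W)
    (A : Set V) (hA : A.Nonempty) (hAne : A ≠ univ) (x : V) :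
    Var[fun ω ↦ ω x; μ | MeasurableSpace.comap (domRestrict A) inferInstance] =ᵐ[μ]
      fun _ ↦
        GFF.zGreen G d (Fintype.card V) x x -
          (∫ p, GFF.zGreen G d (Fintype.card V) (GFF.stopAt A p) x ∂W x) +
          GFF.meanHitTime A W x / GFF.uniformMean (GFF.meanHitTime A W) *
            GFF.uniformMean fun z ↦
              ∫ p, GFF.zGreen G d (Fintype.card V) (GFF.stopAt A p) x ∂W z := by
  obtain ⟨a, ha⟩ := hA
  obtain ⟨z, hz⟩ := (ne_univ_iff_exists_notMem A).1 hAne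
  have : Nontrivial V := ⟨a, z, ne_of_mem_of_not_mem ha hz⟩
  have hd := GFF.ne_zero_of_isReg hconn hreg
  have := hW.discreteMeasurableSpace
  have := hW.1
  have hsupp := GFF.support_condMeanWeight_subset (hW.ae_stopAt_mem hconn hreg hd ⟨a, ha⟩) x
  have hvar := hμ.condVar_ae_eq (GFF.posSemidef_zGreen hconn hreg hd) hsupp fun _ hmem ↦
    (hW.sum_condMeanWeight_mul_zGreen hconn hreg hd hAne hmem x).symm
  rwa [GFF.sum_condMeanWeight_mul, ← sub_add] at hvar

/-- conditional variance of the zero-average GFF given its values on `A`. -/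
theorem gff_conditional_variance
    (d : ℕ) (hd : 3 ≤ d)
    (V : Type) [Fintype V] [MeasurableSpace V]
    (G : SimpleGraph V) (hconn : G.Connected) (hreg : GFF.IsReg G d)
    (μ : Measure (V → ℝ)) (hμ : GFF.IsGaussianField μ (GFF.zGreen G d (Fintype.card V)))
    (W : V → Measure (ℕ → V)) (hW : GFF.IsSRW G d W)
    (A : Set V) (hA : A.Nonempty) (hAne : A ≠ Set.univ) (x : V)
    (mA : MeasurableSpace (V → ℝ))
    (hmA : mA = MeasurableSpace.comap (fun ω : V → ℝ => A.restrict ω) inferInstance) :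
    condExp mA μ (fun ω => (ω x - condExp mA μ (fun ω' => ω' x) ω) ^ 2) =ᵐ[μ]
      fun _ =>
        GFF.zGreen G d (Fintype.card V) x x -
          (∫ p, GFF.zGreen G d (Fintype.card V) (GFF.stopAt A p) x ∂ W x) +
          ((∫ p, ((GFF.hitTime A p).toNat : ℝ) ∂ W x) /
              ((Fintype.card V : ℝ)⁻¹ *
                ∑ z : V, ∫ p, ((GFF.hitTime A p).toNat : ℝ) ∂ W z)) *
            ((Fintype.card V : ℝ)⁻¹ *
              ∑ z : V, ∫ p, GFF.zGreen G d (Fintype.card V) (GFF.stopAt A p) x ∂ W z) := by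
  subst hmA
  exact gff_conditional_variance_general d V G hconn hreg μ hμ W hW A hA hAne x
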